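/- Suppose every k columns of A are linearly independent. Then for every λ > 0, every γ ∈ [0,∞), and every c ∈ ℝ, the sublevel set { x ∈ ℝ^d : (1/2)‖Ax − y‖₂² + λ τ_{k,γ}(x) ≤ c } is compact, and likewise the sublevel set { x ∈ ℝ^d : (1/2)‖Ax − y‖₂² + λ τ_k(x) ≤ c } of the trimmed-lasso objective is compact. -/

import Mathlib

open Finset Filter Topology

/-- Euclidean (ℓ₂) norm of a vector in ℝ^m. -/
noncomputable def l2norm {m : ℕ} (v : Fin m → ℝ) : ℝ := Real.sqrt (∑ i, v i ^ 2)

/-- The trimmed lasso penalty: the minimum, over index sets Λ of size d − k,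
of the ℓ₁ norm of x restricted to Λ. -/
noncomputable def tauTL {d : ℕ} (k : ℕ) (x : Fin d → ℝ) : ℝ :=
  sInf ((fun Λ : Finset (Fin d) => ∑ i ∈ Λ, |x i|) '' {Λ : Finset (Fin d) | Λ.card = d - k})

/-- The generalized soft-min penalty τ_{k,γ}; at γ = 0 it equals
((d−k)/d)‖x‖₁. -/
noncomputable def tauGSM {d : ℕ} (k : ℕ) (γ : ℝ) (x : Fin d → ℝ) : ℝ :=
  if γ = 0 then (((d : ℝ) - (k : ℝ)) / (d : ℝ)) * ∑ i, |x i|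
  else -(1 / γ) * Real.log ((1 / (d.choose (d - k) : ℝ)) *
    ∑ Λ ∈ Finset.univ.powersetCard (d - k), Real.exp (-γ * ∑ i ∈ Λ, |x i|))

/-!
For fixed `Λ`, the function `½‖Ax - y‖² + λ ∑_{i ∈ Λ} |x i|` is coercive as soon as the columns of
`A` outside `Λ` are independent: then no nonzero `x` satisfies both `Ax = 0` and `x = 0` on `Λ`.
The trimmed lasso is the minimum of the penalties `∑_{i ∈ Λ} |x i|` over `|Λ| = d - k`, so its
sublevel sets are finite unions of compact sets. The soft-min penalty is a quasi-arithmetic mean of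
these same penalties, hence is continuous and at least their minimum, and its sublevel sets are
closed subsets of those of the trimmed lasso.
-/

section Coercivity

variable {E F G : Type*} [NormedAddCommGroup E] [NormedSpace ℝ E] [FiniteDimensional ℝ E]
  [NormedAddCommGroup F] [NormedSpace ℝ F] [NormedAddCommGroup G] [NormedSpace ℝ G]

theorem isCompact_sublevel_sq_norm_add_norm {T : E →ₗ[ℝ] F} {L : E →ₗ[ℝ] G}
    (hTL : Disjoint (LinearMap.ker T) (LinearMap.ker L)) (y : F) {lam : ℝ} (hlam : 0 < lam)
    (c : ℝ) :
    IsCompact {x : E | 1 / 2 * ‖T x - y‖ ^ 2 + lam * ‖L x‖ ≤ c} := by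
  have : ProperSpace E := FiniteDimensional.proper ℝ E
  have hT : Continuous T := T.continuous_of_finiteDimensional
  have hL : Continuous L := L.continuous_of_finiteDimensional
  obtain ⟨K, -, hK⟩ := (T.prod L).exists_antilipschitzWith
    ((LinearMap.ker_prod T L).trans hTL.eq_bot)
  have hbdd : Bornology.IsBounded
      (Metric.closedBall y √(2 * c) ×ˢ Metric.closedBall (0 : G) (c / lam)) :=
    Metric.isBounded_closedBall.prod Metric.isBounded_closedBall
  refine Metric.isCompact_of_isClosed_isBounded (isClosed_le (by fun_prop) continuous_const)
    ((hK.isBounded_preimage hbdd).subset fun x hx => ?_)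
  rw [Set.mem_ofPred_eq] at hx
  have hfit : 0 ≤ ‖T x - y‖ ^ 2 := by positivity
  have hpen : 0 ≤ lam * ‖L x‖ := by positivity
  have hTx : ‖T x - y‖ ≤ √(2 * c) := Real.le_sqrt_of_sq_le (by linarith)
  have hLx : ‖L x‖ ≤ c / lam := (le_div_iff₀' hlam).mpr (by linarith)
  exact ⟨mem_closedBall_iff_norm.mpr hTx, mem_closedBall_zero_iff.mpr hLx⟩

end Coercivity

theorem disjoint_ker_mulVecLin_ker_funLeft {m ι R : Type*} [Fintype ι]
    [DecidableEq ι] [CommRing R] {A : Matrix m ι R} {Λ : Finset ι}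
    (hA : LinearIndepOn R A.col (Λᶜ : Finset ι)) :
    Disjoint (LinearMap.ker A.mulVecLin)
      (LinearMap.ker (LinearMap.funLeft R R (Subtype.val : Λ → ι))) := by
  rw [Submodule.disjoint_def]
  intro x hAx hx
  have hzero : ∀ i ∈ Λ, x i = 0 := fun i hi => congrFun hx ⟨i, hi⟩
  have hcomb : ∑ i ∈ Λᶜ, x i • A.col i = 0 := by
    calc ∑ i ∈ Λᶜ, x i • A.col i
        = ∑ i, x i • A.col i := by
          refine sum_subset (subset_univ _) fun i _ hi => ?_
          rw [hzero i (by simpa using hi), zero_smul]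
      _ = A.mulVec x := by
          rw [Matrix.mulVec_eq_sum]
          simp only [op_smul_eq_smul, Matrix.col]
      _ = 0 := hAx
  have hcompl := linearIndepOn_finset_iff.mp hA x hcomb
  funext i
  by_cases hi : i ∈ Λ
  · exact hzero i hi
  · exact hcompl i (mem_compl.mpr hi)

section Mean

open scoped BigOperators

theorem sum_powersetCard_succ_sum {ι M : Type*} [AddCommMonoid M] (s : Finset ι)
    (m : ℕ) (f : ι → M) :
    ∑ t ∈ s.powersetCard (m + 1), ∑ i ∈ t, f i = (#s - 1).choose m • ∑ i ∈ s, f i := by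
  classical
  calc ∑ t ∈ s.powersetCard (m + 1), ∑ i ∈ t, f i
      = ∑ i ∈ s, ∑ t ∈ s.powersetCard (m + 1) with {i} ⊆ t, f i := by
        refine sum_comm' fun t i => ?_
        simp only [mem_powersetCard, mem_filter, singleton_subset_iff]
        exact ⟨fun ⟨ht, hi⟩ => ⟨⟨ht, hi⟩, ht.1 hi⟩, fun h => h.1⟩
    _ = ∑ i ∈ s, (#s - 1).choose m • f i := by
        refine sum_congr rfl fun i hi => ?_
        rw [sum_const, card_filter_powersetCard_subset {i} s (m + 1)
          (singleton_subset_iff.mpr hi) (by simp), card_singleton, Nat.add_sub_cancel]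
    _ = (#s - 1).choose m • ∑ i ∈ s, f i := sum_nsmul ..

theorem expect_powersetCard_sum {ι K : Type*} [Field K] [CharZero K] {s : Finset ι} {m : ℕ}
    (hm : m ≤ #s) (f : ι → K) :
    𝔼 t ∈ s.powersetCard m, ∑ i ∈ t, f i = m / #s * ∑ i ∈ s, f i := by
  rcases m with _ | m
  · simp
  obtain ⟨N, hN⟩ : ∃ N, #s = N + 1 := ⟨#s - 1, by omega⟩
  have hchoose : ((N + 1).choose (m + 1) : K) ≠ 0 :=
    Nat.cast_ne_zero.mpr (Nat.choose_pos (by omega)).ne'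
  have hpascal : ((N : K) + 1) * N.choose m = (N + 1).choose (m + 1) * (m + 1) := by
    exact_mod_cast N.add_one_mul_choose_eq m
  rw [expect_eq_sum_div_card, sum_powersetCard_succ_sum, card_powersetCard, hN,
    Nat.add_sub_cancel, nsmul_eq_mul]
  push_cast
  field_simp
  linear_combination (∑ i ∈ s, f i) * hpascal

-- `t ↦ exp (-γ t)` and its inverse are both increasing or both decreasing, so the sign of `γ` does
-- not affect the direction of the inequality.
theorem le_neg_one_div_mul_log_expect_exp {α : Type*} {s : Finset α} (hs : s.Nonempty) {g : α → ℝ}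
    {a : ℝ} (ha : ∀ i ∈ s, a ≤ g i) {γ : ℝ} (hγ : γ ≠ 0) :
    a ≤ -(1 / γ) * Real.log (𝔼 i ∈ s, Real.exp (-γ * g i)) := by
  have hmean : 0 < 𝔼 i ∈ s, Real.exp (-γ * g i) := expect_pos (fun _ _ => Real.exp_pos _) hs
  rw [neg_mul, one_div_mul_eq_div, ← neg_div]
  rcases hγ.lt_or_gt with hneg | hpos
  · have hexp : Real.exp (-γ * a) ≤ 𝔼 i ∈ s, Real.exp (-γ * g i) :=
      le_expect hs fun i hi =>
        Real.exp_le_exp.mpr (mul_le_mul_of_nonneg_left (ha i hi) (neg_nonneg.mpr hneg.le))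
    rw [le_div_iff_of_neg hneg]
    linarith [(Real.le_log_iff_exp_le hmean).mpr hexp]
  · have hexp : 𝔼 i ∈ s, Real.exp (-γ * g i) ≤ Real.exp (-γ * a) :=
      expect_le hs fun i hi =>
        Real.exp_le_exp.mpr (mul_le_mul_of_nonpos_left (ha i hi) (neg_nonpos.mpr hpos.le))
    rw [le_div_iff₀ hpos]
    linarith [(Real.log_le_iff_le_exp hmean).mpr hexp]

end Mean

section Penalties

open scoped BigOperators

variable {d k : ℕ}

theorem powersetCard_univ_sub_nonempty (d k : ℕ) :
    ((univ : Finset (Fin d)).powersetCard (d - k)).Nonempty :=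
  powersetCard_nonempty.mpr (by simp)

theorem isLeast_tauTL (k : ℕ) (x : Fin d → ℝ) :
    IsLeast ((fun Λ : Finset (Fin d) => ∑ i ∈ Λ, |x i|) '' {Λ | #Λ = d - k}) (tauTL k x) := by
  obtain ⟨Λ, hΛ⟩ := powersetCard_univ_sub_nonempty d k
  have hfin := Set.toFinite ((fun Λ : Finset (Fin d) => ∑ i ∈ Λ, |x i|) '' {Λ | #Λ = d - k})
  exact ⟨Set.Nonempty.csInf_mem ⟨_, Λ, (mem_powersetCard.mp hΛ).2, rfl⟩ hfin,
    fun _ h => csInf_le hfin.bddBelow h⟩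

theorem tauTL_le_iff {x : Fin d → ℝ} {r : ℝ} :
    tauTL k x ≤ r ↔ ∃ Λ : Finset (Fin d), #Λ = d - k ∧ ∑ i ∈ Λ, |x i| ≤ r := by
  refine ⟨fun h => ?_, fun ⟨Λ, hΛ, h⟩ => ((isLeast_tauTL k x).2 ⟨Λ, hΛ, rfl⟩).trans h⟩
  obtain ⟨Λ, hΛ, hmin⟩ := (isLeast_tauTL k x).1
  exact ⟨Λ, hΛ, hmin.le.trans h⟩

theorem tauGSM_zero (k : ℕ) (x : Fin d → ℝ) :
    tauGSM k 0 x = ((d : ℝ) - k) / d * ∑ i, |x i| :=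
  if_pos rfl

theorem tauGSM_zero_eq_expect (hk : k ≤ d) (x : Fin d → ℝ) :
    tauGSM k 0 x = 𝔼 Λ ∈ univ.powersetCard (d - k), ∑ i ∈ Λ, |x i| := by
  rw [expect_powersetCard_sum (by simp), tauGSM_zero, Nat.cast_sub hk, card_fin]

theorem tauGSM_of_ne_zero (k : ℕ) {γ : ℝ} (hγ : γ ≠ 0) (x : Fin d → ℝ) :
    tauGSM k γ x = -(1 / γ) *
      Real.log (𝔼 Λ ∈ univ.powersetCard (d - k), Real.exp (-γ * ∑ i ∈ Λ, |x i|)) := by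
  rw [tauGSM, if_neg hγ, expect_eq_sum_div_card, card_powersetCard, card_fin, one_div_mul_eq_div]

theorem tauTL_le_tauGSM (hk : k ≤ d) (γ : ℝ) (x : Fin d → ℝ) : tauTL k x ≤ tauGSM k γ x := by
  have hP := powersetCard_univ_sub_nonempty d k
  have hle : ∀ Λ ∈ univ.powersetCard (d - k), tauTL k x ≤ ∑ i ∈ Λ, |x i| := fun Λ hΛ =>
    tauTL_le_iff.mpr ⟨Λ, (mem_powersetCard.mp hΛ).2, le_rfl⟩
  rcases eq_or_ne γ 0 with rfl | hγ
  · rw [tauGSM_zero_eq_expect hk]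
    exact le_expect hP hle
  · rw [tauGSM_of_ne_zero k hγ]
    exact le_neg_one_div_mul_log_expect_exp hP hle hγ

theorem continuous_tauGSM (k : ℕ) (γ : ℝ) : Continuous (tauGSM k γ : (Fin d → ℝ) → ℝ) := by
  rcases eq_or_ne γ 0 with rfl | hγ
  · rw [funext (tauGSM_zero k)]
    fun_prop
  · rw [funext (tauGSM_of_ne_zero k hγ)]
    simp only [expect_eq_sum_div_card]
    refine continuous_const.mul (Continuous.log (by fun_prop) fun x => ?_)
    rw [← expect_eq_sum_div_card]
    exact (expect_pos (fun _ _ => Real.exp_pos _) (powersetCard_univ_sub_nonempty d k)).ne'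

end Penalties

section SublevelSets

variable {n d k : ℕ} {A : Matrix (Fin n) (Fin d) ℝ}

theorem l2norm_eq_norm_toLp {m : ℕ} (v : Fin m → ℝ) : l2norm v = ‖WithLp.toLp 2 v‖ := by
  simp only [l2norm, EuclideanSpace.norm_eq, Real.norm_eq_abs, sq_abs]

theorem isCompact_sublevel_sum_abs {Λ : Finset (Fin d)}
    (hA : LinearIndepOn ℝ A.col (Λᶜ : Finset (Fin d))) (y : Fin n → ℝ) {lam : ℝ}
    (hlam : 0 < lam) (c : ℝ) :
    IsCompact {x : Fin d → ℝ |
      (1 / 2) * (l2norm (A.mulVec x - y)) ^ 2 + lam * ∑ i ∈ Λ, |x i| ≤ c} := by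
  let T : (Fin d → ℝ) →ₗ[ℝ] EuclideanSpace ℝ (Fin n) :=
    (WithLp.linearEquiv 2 ℝ (Fin n → ℝ)).symm.toLinearMap ∘ₗ A.mulVecLin
  let L : (Fin d → ℝ) →ₗ[ℝ] PiLp 1 (fun _ : Λ => ℝ) :=
    (WithLp.linearEquiv 1 ℝ (Λ → ℝ)).symm.toLinearMap ∘ₗ LinearMap.funLeft ℝ ℝ Subtype.val
  have hker : Disjoint (LinearMap.ker T) (LinearMap.ker L) := by
    simpa only [T, L, LinearEquiv.ker_comp] using disjoint_ker_mulVecLin_ker_funLeft hA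
  have hT (x : Fin d → ℝ) : l2norm (A.mulVec x - y) = ‖T x - WithLp.toLp 2 y‖ :=
    l2norm_eq_norm_toLp _
  have hL (x : Fin d → ℝ) : ∑ i ∈ Λ, |x i| = ‖L x‖ := by
    rw [PiLp.norm_eq_of_L1, ← sum_coe_sort]
    rfl
  simp only [hT, hL]
  exact isCompact_sublevel_sq_norm_add_norm hker (WithLp.toLp 2 y) hlam c

theorem isCompact_sublevel_tauTL (hk : k ≤ d)
    (hA : ∀ s : Finset (Fin d), #s = k → LinearIndepOn ℝ A.col s) (y : Fin n → ℝ) {lam : ℝ}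
    (hlam : 0 < lam) (c : ℝ) :
    IsCompact {x : Fin d → ℝ |
      (1 / 2) * (l2norm (A.mulVec x - y)) ^ 2 + lam * tauTL k x ≤ c} := by
  have hunion : {x : Fin d → ℝ | (1 / 2) * (l2norm (A.mulVec x - y)) ^ 2 + lam * tauTL k x ≤ c} =
      ⋃ Λ ∈ {Λ : Finset (Fin d) | #Λ = d - k}, {x : Fin d → ℝ |
        (1 / 2) * (l2norm (A.mulVec x - y)) ^ 2 + lam * ∑ i ∈ Λ, |x i| ≤ c} := by
    ext x
    simp only [Set.mem_ofPred_eq, Set.mem_iUnion, exists_prop, ← le_sub_iff_add_le',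
      ← le_div_iff₀' hlam, tauTL_le_iff]
  rw [hunion]
  refine (Set.toFinite _).isCompact_biUnion fun Λ hΛ => ?_
  have hcard : #Λᶜ = k := by rw [card_compl, Fintype.card_fin, hΛ, Nat.sub_sub_self hk]
  exact isCompact_sublevel_sum_abs (hA _ hcard) y hlam c

theorem isCompact_sublevel_tauGSM (hk : k ≤ d)
    (hA : ∀ s : Finset (Fin d), #s = k → LinearIndepOn ℝ A.col s) (y : Fin n → ℝ) {lam : ℝ}
    (hlam : 0 < lam) (γ c : ℝ) :
    IsCompact {x : Fin d → ℝ |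
      (1 / 2) * (l2norm (A.mulVec x - y)) ^ 2 + lam * tauGSM k γ x ≤ c} := by
  have hpen := continuous_tauGSM (d := d) k γ
  refine (isCompact_sublevel_tauTL hk hA y hlam c).of_isClosed_subset
    (isClosed_le ?_ continuous_const) fun x hx => ?_
  · simp only [l2norm]
    fun_prop
  · rw [Set.mem_ofPred_eq] at hx ⊢
    refine le_trans ?_ hx
    gcongr
    exact tauTL_le_tauGSM hk γ x

theorem stmt18_general (hk : k ≤ d)
    (hA : ∀ s : Finset (Fin d), #s = k → LinearIndepOn ℝ A.col s) (y : Fin n → ℝ) {lam : ℝ}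
    (hlam : 0 < lam) (γ c : ℝ) :
    IsCompact {x : Fin d → ℝ |
      (1 / 2) * (l2norm (A.mulVec x - y)) ^ 2 + lam * tauGSM k γ x ≤ c} ∧
    IsCompact {x : Fin d → ℝ |
      (1 / 2) * (l2norm (A.mulVec x - y)) ^ 2 + lam * tauTL k x ≤ c} :=
  ⟨isCompact_sublevel_tauGSM hk hA y hlam γ c, isCompact_sublevel_tauTL hk hA y hlam c⟩

end SublevelSets

/-- If every k columns of A are linearly independent, then for every λ > 0,
γ ∈ [0,∞) and c ∈ ℝ, the sublevel sets of the GSM-penalized objective and of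
the trimmed-lasso objective are compact. -/
theorem stmt18 {n d : ℕ} (k : ℕ) (hk : 0 < k) (hkd : k < d)
    (A : Matrix (Fin n) (Fin d) ℝ) (y : Fin n → ℝ)
    (hind : ∀ s : Finset (Fin d), s.card = k →
      LinearIndependent ℝ (fun i : s => (fun j => A j (i : Fin d))))
    (lam : ℝ) (hlam : 0 < lam) (γ : ℝ) (hγ : 0 ≤ γ) (c : ℝ) :
    IsCompact {x : Fin d → ℝ |
      (1 / 2) * (l2norm (A.mulVec x - y)) ^ 2 + lam * tauGSM k γ x ≤ c} ∧
    IsCompact {x : Fin d → ℝ |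
      (1 / 2) * (l2norm (A.mulVec x - y)) ^ 2 + lam * tauTL k x ≤ c} := by
  exact stmt18_general hkd.le hind y hlam γ c
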